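/- Let f : 𝖱^n → 𝖱 be continuous, let I ⊆ N = {1,…,n} be nonempty, and suppose f is I-cofinal. Then the set {α < ω₁ : f(A_I^+(α)) ⊆ [α, ω₁) and f(A_I^-(α)) ⊆ [0,α]} is a closed unbounded subset of ω₁. -/

import Mathlib

noncomputable section
open Set

/-- The first uncountable ordinal `ω₁`. -/
def Omega1 : Ordinal := Ordinal.omega 1

/-- The closed long ray `𝖱`: `ω₁ × [0,1)` with the lexicographic order. -/
def LongRay : Type 1 := {o : Ordinal // o < Omega1} ×ₗ (Set.Ico (0:ℝ) 1)

instance : LinearOrder LongRay :=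
  inferInstanceAs (LinearOrder ({o : Ordinal // o < Omega1} ×ₗ (Set.Ico (0:ℝ) 1)))

/-- `𝖱` carries the order topology. -/
instance : TopologicalSpace LongRay := Preorder.topology LongRay
instance : OrderTopology LongRay := ⟨rfl⟩

lemma omega1_pos : (0 : Ordinal) < Omega1 := Ordinal.omega_pos 1

/-- The point `0 = (0,0)` of the long ray. -/
def rayZero : LongRay := toLex (⟨0, omega1_pos⟩, ⟨0, by simp⟩)

/-- Identification of the countable ordinal `o` with the point `(o,0)` of the long ray
(junk value for `o ≥ ω₁`). -/
def ordR (o : Ordinal) : LongRay :=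
  if h : o < Omega1 then toLex (⟨o, h⟩, ⟨0, by simp⟩) else rayZero

/-- The `I`-diagonal at height `c` (only the values of `c` off `I` are relevant). -/
def Delta (n : ℕ) (I : Finset (Fin n)) (c : Fin n → LongRay) : Set (Fin n → LongRay) :=
  {x | (∀ i ∈ I, ∀ i' ∈ I, x i = x i') ∧ ∀ j ∉ I, x j = c j}

/-- `f` is `I`-cofinal if `f` restricted to `Δ_I = Δ_I(0)` is unbounded. -/
def ICofinal (n : ℕ) (f : (Fin n → LongRay) → LongRay) (I : Finset (Fin n)) : Prop :=
  ¬ BddAbove (f '' Delta n I (fun _ => rayZero))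

/-- The cofinality class `𝔠(f) = {I : f is I-cofinal}`. -/
def cofClass (n : ℕ) (f : (Fin n → LongRay) → LongRay) : Set (Finset (Fin n)) :=
  {I | ICofinal n f I}

/-- `M_I(c) = {x : x_i ≥ c for all i ∈ I}`. -/
def MSet (n : ℕ) (I : Finset (Fin n)) (c : LongRay) : Set (Fin n → LongRay) :=
  {x | ∀ i ∈ I, c ≤ x i}

/-- `E_I(b,d) = {x ∈ M_I(d) : x_j = b_j for all j ∉ I}`. -/
def ESet (n : ℕ) (I : Finset (Fin n)) (b : Fin n → LongRay) (d : LongRay) :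
    Set (Fin n → LongRay) :=
  {x | (∀ i ∈ I, d ≤ x i) ∧ ∀ j ∉ I, x j = b j}

/-- `A_I^-(α) = {x : x_i ≤ α ∀ i ∈ I, and x_j ≤ max_{i ∈ I} x_i ∀ j}`. -/
def AMinus (n : ℕ) (I : Finset (Fin n)) (a : LongRay) : Set (Fin n → LongRay) :=
  {x | (∀ i ∈ I, x i ≤ a) ∧ ∀ j, ∃ i ∈ I, x j ≤ x i}

/-- `A_I^+(α) = {x : x_i ≥ α ∀ i ∈ I, and x_j ≤ max_{i ∈ I} x_i ∀ j}`. -/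
def APlus (n : ℕ) (I : Finset (Fin n)) (a : LongRay) : Set (Fin n → LongRay) :=
  {x | (∀ i ∈ I, a ≤ x i) ∧ ∀ j, ∃ i ∈ I, x j ≤ x i}

/-!
In the long ray countable sets are bounded, so an increasing sequence converges, and every sequence
interlaced with it has the same limit. Hence two closed unbounded sets meet, and a continuous map
that is unbounded along a diagonal tends to infinity there, uniformly near each height. The heights
at which it does so form a clopen set, so all heights qualify; letting the heights vary, divergence
passes from the `I`-diagonals to the `J`-diagonals for `I ⊆ J`.

By downward induction on `I`, `f x` is large as soon as all coordinates of `x` in `I` are: were `f`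
small at such points, the coordinates outside `I` would be bounded by the case of larger index sets,
and a limit of such points on the `I`-diagonals would contradict divergence over a compact box of
heights. As `f` is also bounded on bounded boxes, closing off under these two estimates yields
arbitrarily large partition points.
-/

open Filter Topology

variable {ι R S X : Type*}

section CountablyDirected

theorem eventually_forall_mem_of_isCompact [TopologicalSpace X] {l : Filter R} {K : Set X}
    (hK : IsCompact K) {p : X × R → Prop} (h : ∀ x ∈ K, ∀ᶠ y in 𝓝 x ×ˢ l, p y) :
    ∀ᶠ t in l, ∀ x ∈ K, p (x, t) := by
  have hprod : ∀ᶠ y in 𝓝ˢ K ×ˢ l, p y := hK.mem_nhdsSet_prod_of_forall h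
  obtain ⟨U, hU, V, hV, hUV⟩ := mem_prod_iff.1 hprod
  filter_upwards [hV] with t ht x hx
  exact hUV ⟨subset_of_mem_nhdsSet hU hx, ht⟩

theorem bddAbove_of_countable [LinearOrder R] [Nonempty R] [CountableInterFilter (atTop : Filter R)]
    {s : Set R} (hs : s.Countable) : BddAbove s :=
  ((eventually_countable_ball hs).2 fun a _ ↦ eventually_ge_atTop a).exists

theorem countableInterFilter_atTop_of_bddAbove [LinearOrder R] [Nonempty R]
    (h : ∀ s : Set R, s.Countable → BddAbove s) : CountableInterFilter (atTop : Filter R) where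
  countable_sInter_mem 𝒰 h𝒰 hmem := by
    choose! b hb using fun U hU ↦ mem_atTop_sets.1 (hmem U hU)
    obtain ⟨a, ha⟩ := h (b '' 𝒰) (h𝒰.image b)
    exact mem_atTop_sets.2 ⟨a, fun c hc U hU ↦ hb U hU c ((ha (mem_image_of_mem b hU)).trans hc)⟩

theorem tendsto_of_interlaced [Preorder R] [TopologicalSpace R] [OrderTopology R]
    {a u : ℕ → R} {l : R} (ha : Tendsto a atTop (𝓝 l))
    (hau : ∀ k, a k ≤ u k) (hua : ∀ k, u k ≤ a (k + 1)) : Tendsto u atTop (𝓝 l) :=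
  tendsto_of_tendsto_of_tendsto_of_le_of_le ha ((tendsto_add_atTop_iff_nat 1).2 ha) hau hua

variable [ConditionallyCompleteLinearOrder R] [CountableInterFilter (atTop : Filter R)]
  [TopologicalSpace R] [OrderTopology R]

theorem exists_monotone_seq_tendsto {r : ℕ → R → R → Prop} (hr : ∀ k a, ∃ b, a ≤ b ∧ r k a b)
    (a₀ : R) :
    ∃ (a : ℕ → R) (l : R), a 0 = a₀ ∧ Monotone a ∧ (∀ k, r k (a k) (a (k + 1))) ∧
      Tendsto a atTop (𝓝 l) := by
  choose next hle hnext using hr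
  have : Nonempty R := ⟨a₀⟩
  let a : ℕ → R := fun k ↦ Nat.rec a₀ next k
  have ha : Monotone a := monotone_nat_of_le_succ fun k ↦ hle k (a k)
  exact ⟨a, ⨆ k, a k, rfl, ha, fun k ↦ hnext k (a k),
    tendsto_atTop_ciSup ha (bddAbove_of_countable (countable_range a))⟩

theorem frequently_inter_of_isClosed {Z Z' : Set R} (hZ : IsClosed Z) (hZ' : IsClosed Z')
    (h : ∃ᶠ t in atTop, t ∈ Z) (h' : ∃ᶠ t in atTop, t ∈ Z') : ∃ᶠ t in atTop, t ∈ Z ∩ Z' := by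
  rcases isEmpty_or_nonempty R with _ | _
  · exact (h.exists.elim fun t ↦ isEmptyElim t)
  refine frequently_atTop.2 fun b ↦ ?_
  have hstep : ∀ (_ : ℕ) (a : R), ∃ d, a ≤ d ∧ ∃ t ∈ Z, ∃ t' ∈ Z', a ≤ t ∧ t ≤ t' ∧ t' ≤ d := by
    intro _ a
    obtain ⟨t, hat, ht⟩ := frequently_atTop.1 h a
    obtain ⟨t', htt', ht'⟩ := frequently_atTop.1 h' t
    exact ⟨t', hat.trans htt', t, ht, t', ht', hat, htt', le_rfl⟩
  obtain ⟨a, l, rfl, ha, hchain, hal⟩ := exists_monotone_seq_tendsto hstep b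
  choose t ht t' ht' hat htt' hta using hchain
  have htl : Tendsto t atTop (𝓝 l) := tendsto_of_interlaced hal hat fun k ↦ (htt' k).trans (hta k)
  have htl' : Tendsto t' atTop (𝓝 l) :=
    tendsto_of_interlaced hal (fun k ↦ (hat k).trans (htt' k)) hta
  exact ⟨l, ha.ge_of_tendsto hal 0, hZ.mem_of_tendsto htl (.of_forall ht),
    hZ'.mem_of_tendsto htl' (.of_forall ht')⟩

variable [TopologicalSpace X] [FirstCountableTopology X]

theorem frequently_fiber_of_isClosed {Z : Set (X × R)} (hZ : IsClosed Z) {x : X}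
    (h : ∃ᶠ p in 𝓝 x ×ˢ atTop, p ∈ Z) : ∃ᶠ t in atTop, (x, t) ∈ Z := by
  rcases isEmpty_or_nonempty R with _ | _
  · exact (h.exists.elim fun p ↦ isEmptyElim p.2)
  refine frequently_atTop.2 fun b ↦ ?_
  obtain ⟨U, hU⟩ := (𝓝 x).exists_antitone_basis
  have hstep : ∀ (k : ℕ) (a : R), ∃ t, a ≤ t ∧ ∃ y ∈ U k, (y, t) ∈ Z := by
    intro k a
    obtain ⟨⟨y, t⟩, hyt, hy, ht⟩ :=
      (h.and_eventually (prod_mem_prod (hU.mem k) (Ici_mem_atTop a))).exists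
    exact ⟨t, ht, y, hy, hyt⟩
  obtain ⟨a, l, rfl, ha, hchain, hal⟩ := exists_monotone_seq_tendsto hstep b
  choose y hyU hyZ using hchain
  exact ⟨l, ha.ge_of_tendsto hal 0, hZ.mem_of_tendsto
    ((hU.tendsto hyU).prodMk_nhds ((tendsto_add_atTop_iff_nat 1).2 hal)) (.of_forall hyZ)⟩

variable [LinearOrder S] [TopologicalSpace S] [OrderClosedTopology S]

theorem tendsto_atTop_of_frequently_ge [NoMaxOrder S] {g : R → S} (hg : Continuous g)
    (h : ∀ z, ∃ᶠ t in atTop, z ≤ g t) : Tendsto g atTop atTop := by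
  refine tendsto_atTop.2 fun z ↦ by_contra fun hz ↦ ?_
  have hlow : ∃ᶠ t in atTop, t ∈ {t | g t ≤ z} :=
    (not_eventually.1 hz).mono fun t ht ↦ (not_le.1 ht).le
  obtain ⟨z', hz'⟩ := exists_gt z
  obtain ⟨t, ht, ht'⟩ := (frequently_inter_of_isClosed (isClosed_le hg continuous_const)
    (isClosed_le continuous_const hg) hlow (h z')).exists
  exact (hz'.trans_le (ht'.trans ht)).false

theorem tendsto_nhds_prod_atTop [NoMaxOrder S] {F : X × R → S} (hF : Continuous F) {x : X}
    (h : Tendsto (fun t ↦ F (x, t)) atTop atTop) : Tendsto F (𝓝 x ×ˢ atTop) atTop := by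
  refine tendsto_atTop.2 fun z ↦ by_contra fun hz ↦ ?_
  have hlow : ∃ᶠ p in 𝓝 x ×ˢ atTop, p ∈ {p | F p ≤ z} :=
    (not_eventually.1 hz).mono fun p hp ↦ (not_le.1 hp).le
  obtain ⟨t, ht, hzt⟩ := ((frequently_fiber_of_isClosed (isClosed_le hF continuous_const)
    hlow).and_eventually (h.eventually_gt_atTop z)).exists
  exact ht.not_gt hzt

theorem isClopen_setOf_tendsto_atTop [NoMaxOrder S] [CountableInterFilter (atTop : Filter S)]
    {F : X × R → S} (hF : Continuous F) :
    IsClopen {x | Tendsto (fun t ↦ F (x, t)) atTop atTop} := by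
  refine ⟨IsSeqClosed.isClosed fun u x hu hux ↦ tendsto_atTop.2 fun z ↦ ?_,
    isClosed_compl_iff.1 (IsSeqClosed.isClosed fun u x hu hux hx ↦ ?_)⟩
  · have hall : ∀ᶠ t in atTop, ∀ k, z ≤ F (u k, t) :=
      eventually_countable_forall.2 fun k ↦ (hu k).eventually_ge_atTop z
    filter_upwards [hall] with t ht
    exact ge_of_tendsto' ((hF.tendsto (x, t)).comp (hux.prodMk_nhds tendsto_const_nhds)) ht
  · have hbdd : ∀ k, ∃ z, ∃ᶠ t in atTop, F (u k, t) < z := fun k ↦ by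
      simpa [tendsto_atTop, frequently_atTop] using hu k
    choose z hz using hbdd
    have : Nonempty S := ⟨z 0⟩
    obtain ⟨w, hw⟩ := bddAbove_of_countable (countable_range z)
    have hlarge : ∀ᶠ y in 𝓝 x, ∀ᶠ t in atTop, w ≤ F (y, t) :=
      ((tendsto_nhds_prod_atTop hF hx).eventually_ge_atTop w).curry
    obtain ⟨k, hk⟩ := (hux.eventually hlarge).exists
    obtain ⟨t, htz, hwt⟩ := ((hz k).and_eventually hk).exists
    exact (htz.trans_le (hw ⟨k, rfl⟩)).not_ge hwt

end CountablyDirected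

section Diagonal

theorem frequently_exists_mem_diagonal [Finite ι]
    [ConditionallyCompleteLinearOrderBot R] [CountableInterFilter (atTop : Filter R)]
    [TopologicalSpace R] [OrderTopology R] [FirstCountableTopology R] {J : Finset ι}
    {Z : Set (ι → R)} (hZ : IsClosed Z) (h : ∃ᶠ b in atTop, ∃ x ∈ Z, ∀ i ∈ J, b ≤ x i) :
    ∃ᶠ t in atTop, ∃ x ∈ Z, ∀ i ∈ J, x i = t := by
  refine frequently_atTop.2 fun b ↦ ?_
  have hstep : ∀ (_ : ℕ) (a : R), ∃ d, a ≤ d ∧ ∃ x ∈ Z, (∀ i ∈ J, a ≤ x i) ∧ ∀ i, x i ≤ d := by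
    intro _ a
    obtain ⟨a', haa', x, hxZ, hx⟩ := frequently_atTop.1 h a
    obtain ⟨d, hd⟩ := (finite_range x).bddAbove
    exact ⟨a ⊔ d, le_sup_left, x, hxZ, fun i hi ↦ haa'.trans (hx i hi),
      fun i ↦ (hd ⟨i, rfl⟩).trans le_sup_right⟩
  obtain ⟨a, l, rfl, ha, hchain, hal⟩ := exists_monotone_seq_tendsto hstep b
  choose x hxZ hax hxa using hchain
  obtain ⟨y, -, φ, hφ, hxy⟩ := (isCompact_Icc (a := ⊥) (b := fun _ : ι ↦ l)).tendsto_subseq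
    (x := x) fun k ↦ ⟨bot_le, fun i ↦ (hxa k i).trans (ha.ge_of_tendsto hal _)⟩
  refine ⟨l, ha.ge_of_tendsto hal 0, y, hZ.mem_of_tendsto hxy (.of_forall fun k ↦ hxZ _),
    fun i hi ↦ ?_⟩
  have hxl : Tendsto (fun k ↦ x k i) atTop (𝓝 l) :=
    tendsto_of_interlaced hal (fun k ↦ hax k i hi) fun k ↦ hxa k i
  exact tendsto_nhds_unique (tendsto_pi_nhds.1 hxy i) (hxl.comp hφ.tendsto_atTop)

variable [DecidableEq ι]

/-- The point of the `J`-diagonal at height `c` whose coordinates in `J` all equal `t`. -/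
def diagonalPoint (J : Finset ι) (c : ι → R) (t : R) : ι → R :=
  J.piecewise (fun _ ↦ t) c

theorem continuous_piecewise_finset [TopologicalSpace X] [TopologicalSpace R] {g h : X → ι → R}
    (J : Finset ι) (hg : Continuous g) (hh : Continuous h) :
    Continuous fun x ↦ J.piecewise (g x) (h x) := by
  refine continuous_pi fun i ↦ ?_
  by_cases hi : i ∈ J
  · simpa only [Finset.piecewise_eq_of_mem _ _ _ hi] using continuous_pi_iff.1 hg i
  · simpa only [Finset.piecewise_eq_of_notMem _ _ _ hi] using continuous_pi_iff.1 hh i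

theorem continuous_diagonalPoint [TopologicalSpace R] (J : Finset ι) :
    Continuous fun p : (ι → R) × R ↦ diagonalPoint J p.1 p.2 :=
  continuous_piecewise_finset J (by fun_prop) continuous_fst

/-- `f` tends to infinity along the `J`-diagonal at height `c`. For continuous maps on the long
ray this amounts to being unbounded there. -/
def DivergesAlong [Preorder R] [Preorder S] (f : (ι → R) → S) (J : Finset ι) (c : ι → R) : Prop :=
  Tendsto (fun t ↦ f (diagonalPoint J c t)) atTop atTop

variable [ConditionallyCompleteLinearOrderBot R] [CountableInterFilter (atTop : Filter R)]
  [TopologicalSpace R] [OrderTopology R]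
  [LinearOrder S] [NoMaxOrder S] [TopologicalSpace S] [OrderClosedTopology S]
  {f : (ι → R) → S} {I J : Finset ι} {c : ι → R}

theorem divergesAlong_of_not_bddAbove (hf : Continuous f)
    (h : ¬BddAbove (f '' range (diagonalPoint J c))) : DivergesAlong f J c := by
  have hg : Continuous fun t ↦ f (diagonalPoint J c t) :=
    hf.comp ((continuous_diagonalPoint J).comp (Continuous.prodMk_right c))
  refine tendsto_atTop_of_frequently_ge hg fun z ↦ frequently_atTop.2 fun b ↦ ?_
  have : Nonempty S := ⟨z⟩
  obtain ⟨M, hM⟩ := ((isCompact_Icc (a := ⊥) (b := b)).image hg).bddAbove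
  obtain ⟨_, ⟨_, ⟨t, rfl⟩, rfl⟩, ht⟩ := not_bddAbove_iff.1 h (max z M)
  have hbt : b ≤ t := by
    by_contra! htb
    exact (hM ⟨t, ⟨bot_le, htb.le⟩, rfl⟩).not_gt ((le_max_right z M).trans_lt ht)
  exact ⟨t, hbt, (le_max_left z M).trans ht.le⟩

variable [FirstCountableTopology R] [DenselyOrdered R] [CountableInterFilter (atTop : Filter S)]

theorem DivergesAlong.change_height [Countable ι] (hf : Continuous f) (h : DivergesAlong f J c)
    (c' : ι → R) : DivergesAlong f J c' :=
  ((isClopen_setOf_tendsto_atTop (hf.comp (continuous_diagonalPoint J))).eq_univ ⟨c, h⟩).ge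
    (mem_univ c')

-- The heights of the `I`-diagonals may vary with the points chosen on them, so these points can be
-- made to converge to the `J`-diagonal.
theorem DivergesAlong.mono [Countable ι] (hf : Continuous f) (h : DivergesAlong f I c)
    (hIJ : I ⊆ J) : DivergesAlong f J c := by
  have hg : Continuous fun t ↦ f (diagonalPoint J c t) :=
    hf.comp ((continuous_diagonalPoint J).comp (Continuous.prodMk_right c))
  refine tendsto_atTop_of_frequently_ge hg fun z ↦ frequently_atTop.2 fun b ↦ ?_
  have hstep : ∀ (_ : ℕ) (a : R), ∃ d, a ≤ d ∧ z ≤ f (diagonalPoint I (diagonalPoint J c a) d) :=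
    fun _ a ↦ ((eventually_ge_atTop a).and
      ((h.change_height hf (diagonalPoint J c a)).eventually_ge_atTop z)).exists
  obtain ⟨a, l, rfl, ha, hchain, hal⟩ := exists_monotone_seq_tendsto hstep b
  have hcollapse : diagonalPoint I (diagonalPoint J c l) l = diagonalPoint J c l := by
    funext i
    by_cases hi : i ∈ I
    · simp [diagonalPoint, hi, hIJ hi]
    · simp [diagonalPoint, hi]
  have hlim : Tendsto (fun k ↦ diagonalPoint I (diagonalPoint J c (a k)) (a (k + 1))) atTop
      (𝓝 (diagonalPoint J c l)) := by
    have hJ : Tendsto (fun k ↦ diagonalPoint J c (a k)) atTop (𝓝 (diagonalPoint J c l)) :=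
      ((continuous_diagonalPoint J).tendsto (c, l)).comp (tendsto_const_nhds.prodMk_nhds hal)
    rw [← hcollapse]
    exact ((continuous_diagonalPoint I).tendsto (_, l)).comp
      (hJ.prodMk_nhds ((tendsto_add_atTop_iff_nat 1).2 hal))
  exact ⟨l, ha.ge_of_tendsto hal 0, ge_of_tendsto' ((hf.tendsto _).comp hlim) hchain⟩

theorem eventually_forall_lt_of_insert [Finite ι] (hf : Continuous f) (hJ : DivergesAlong f J c)
    {z : S} (hins : ∀ j ∉ J, ∀ᶠ b in atTop, ∀ x, (∀ i ∈ insert j J, b ≤ x i) → z < f x) :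
    ∀ᶠ b in atTop, ∀ x, (∀ i ∈ J, b ≤ x i) → z < f x := by
  obtain ⟨m, hm⟩ := (eventually_all.2 fun j ↦ eventually_imp_distrib_left.2 (hins j)).exists
  have hbox : ∀ᶠ t in atTop, ∀ y ∈ Icc (⊥ : ι → R) fun _ ↦ m, z < f (diagonalPoint J y t) :=
    eventually_forall_mem_of_isCompact isCompact_Icc fun y _ ↦
      (tendsto_nhds_prod_atTop (hf.comp (continuous_diagonalPoint J))
        (hJ.change_height hf y)).eventually_gt_atTop z
  by_contra hcon
  have hlow : ∃ᶠ t in atTop, ∃ x ∈ {x | f x ≤ z}, ∀ i ∈ J, x i = t :=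
    frequently_exists_mem_diagonal (isClosed_le hf continuous_const)
      ((not_eventually.1 hcon).mono fun b hb ↦ by simpa [and_comm] using hb)
  obtain ⟨t, ⟨x, hxz, hxJ⟩, hboxt, hmt⟩ :=
    (hlow.and_eventually (hbox.and (eventually_ge_atTop m))).exists
  have hxm : ∀ j ∉ J, x j ≤ m := by
    intro j hj
    by_contra! hmx
    have hmxJ : ∀ i ∈ insert j J, m ≤ x i :=
      (Finset.forall_mem_insert _ _ _).2 ⟨hmx.le, fun i hi ↦ hmt.trans_eq (hxJ i hi).symm⟩
    exact (hm j hj x hmxJ).not_ge hxz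
  have hx : diagonalPoint J (x ⊓ fun _ ↦ m) t = x := by
    funext i
    by_cases hi : i ∈ J
    · simp [diagonalPoint, hi, hxJ]
    · simp [diagonalPoint, hi, hxm]
  exact (hx ▸ hboxt _ ⟨bot_le, inf_le_right⟩).not_ge hxz

theorem DivergesAlong.eventually_forall_lt [Finite ι] (hf : Continuous f)
    (h : DivergesAlong f I c) (z : S) :
    ∀ᶠ b in atTop, ∀ x, (∀ i ∈ I, b ≤ x i) → z < f x := by
  induction I using WellFoundedGT.induction with
  | ind J ih =>
    exact eventually_forall_lt_of_insert hf h fun j hj ↦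
      ih (insert j J) (Finset.ssubset_insert hj) (h.mono hf (Finset.subset_insert j J))

end Diagonal

section PartitionPoints

/-- The points all of whose coordinates are at most the maximum of the coordinates in `I`: the
union of `A_I^-(a)` and `A_I^+(a)` lies in this set for every `a`. -/
def dominatedBy [LE R] (I : Finset ι) : Set (ι → R) :=
  {x | ∀ j, ∃ i ∈ I, x j ≤ x i}

/-- The points `a` such that `f` maps `A_I^+(a)` above `a` and `A_I^-(a)` below `a`. -/
def partitionPoints [LE R] (f : (ι → R) → R) (I : Finset ι) : Set R :=
  {a | ∀ x ∈ dominatedBy I,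
    ((∀ i ∈ I, a ≤ x i) → a ≤ f x) ∧ ((∀ i ∈ I, x i ≤ a) → f x ≤ a)}

theorem inf_const_eq_of_mem_dominatedBy [SemilatticeInf R] {I : Finset ι} {x : ι → R} {a : R}
    (hx : x ∈ dominatedBy I) (hxa : ∀ i ∈ I, x i ≤ a) : (x ⊓ fun _ ↦ a) = x :=
  inf_eq_left.2 fun j ↦ let ⟨i, hi, hji⟩ := hx j; hji.trans (hxa i hi)

-- Every point of `A_I^+(a)` or `A_I^-(a)` is obtained from a dominated point by truncating at `a`,
-- which turns membership in `partitionPoints f I` into closed conditions on `a`.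
theorem mem_partitionPoints_iff [DecidableEq ι] [Lattice R] {f : (ι → R) → R} {I : Finset ι}
    {a : R} : a ∈ partitionPoints f I ↔ ∀ x ∈ dominatedBy I,
      a ≤ f (I.piecewise (x ⊔ fun _ ↦ a) x) ∧ f (x ⊓ fun _ ↦ a) ≤ a := by
  refine ⟨fun h x hx ↦ ⟨(h _ fun j ↦ ?_).1 fun i hi ↦ ?_, (h _ fun j ↦ ?_).2 fun i _ ↦ ?_⟩,
    fun h x hx ↦ ⟨fun hax ↦ ?_, fun hxa ↦ ?_⟩⟩
  · obtain ⟨i, hi, hji⟩ := hx j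
    refine ⟨i, hi, ?_⟩
    by_cases hj : j ∈ I <;> simpa [hi, hj] using hji.trans le_sup_left
  · simp [hi]
  · obtain ⟨i, hi, hji⟩ := hx j
    exact ⟨i, hi, inf_le_inf_right a hji⟩
  · exact inf_le_right
  · have hraise : I.piecewise (x ⊔ fun _ ↦ a) x = x := by
      funext i
      by_cases hi : i ∈ I
      · simp [hi, hax]
      · simp [hi]
    exact hraise ▸ (h x hx).1
  · exact inf_const_eq_of_mem_dominatedBy hx hxa ▸ (h x hx).2

theorem isClosed_partitionPoints [Lattice R] [TopologicalSpace R] [OrderClosedTopology R]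
    [ContinuousSup R] [ContinuousInf R] {f : (ι → R) → R} (hf : Continuous f) (I : Finset ι) :
    IsClosed (partitionPoints f I) := by
  classical
  have hcut : partitionPoints f I = ⋂ x ∈ dominatedBy I,
      {a | a ≤ f (I.piecewise (x ⊔ fun _ ↦ a) x)} ∩ {a | f (x ⊓ fun _ ↦ a) ≤ a} := by
    ext a
    simp only [mem_partitionPoints_iff, mem_iInter, mem_inter_iff, mem_ofPred_eq]
  rw [hcut]
  refine isClosed_biInter fun x _ ↦ (isClosed_le continuous_id (hf.comp ?_)).inter
    (isClosed_le (hf.comp ?_) continuous_id)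
  · exact continuous_piecewise_finset I (continuous_pi fun _ ↦ continuous_const.sup continuous_id)
      continuous_const
  · exact continuous_pi fun _ ↦ continuous_const.inf continuous_id

theorem frequently_mem_partitionPoints [Finite ι] [DecidableEq ι]
    [ConditionallyCompleteLinearOrderBot R] [CountableInterFilter (atTop : Filter R)]
    [TopologicalSpace R] [OrderTopology R] [FirstCountableTopology R] [DenselyOrdered R]
    [NoMaxOrder R] {f : (ι → R) → R} {I : Finset ι} {c : ι → R} (hf : Continuous f)
    (h : DivergesAlong f I c) : ∃ᶠ a in atTop, a ∈ partitionPoints f I := by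
  refine frequently_atTop.2 fun b ↦ ?_
  have hstep : ∀ (_ : ℕ) (a : R), ∃ d, a ≤ d ∧ (∀ x, (∀ i ∈ I, d ≤ x i) → a < f x) ∧
      ∀ x ∈ Icc (⊥ : ι → R) fun _ ↦ a, f x ≤ d := by
    intro _ a
    obtain ⟨M, hM⟩ := ((isCompact_Icc (a := ⊥) (b := fun _ : ι ↦ a)).image hf).bddAbove
    obtain ⟨d, had, hd, hMd⟩ := ((eventually_ge_atTop a).and
      ((h.eventually_forall_lt hf a).and (eventually_ge_atTop M))).exists
    exact ⟨d, had, hd, fun x hx ↦ (hM (mem_image_of_mem f hx)).trans hMd⟩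
  obtain ⟨a, l, rfl, ha, hchain, hal⟩ := exists_monotone_seq_tendsto hstep b
  choose hlow hupp using hchain
  have hle : ∀ k, a k ≤ l := ha.ge_of_tendsto hal
  refine ⟨l, hle 0, fun x hx ↦ ⟨fun hlx ↦ ?_, fun hxl ↦ ?_⟩⟩
  · exact le_of_tendsto' hal fun k ↦ (hlow k x fun i hi ↦ (hle _).trans (hlx i hi)).le
  · have htrunc : Tendsto (fun k ↦ f (x ⊓ fun _ ↦ a k)) atTop (𝓝 (f (x ⊓ fun _ ↦ l))) :=
      ((hf.comp (continuous_pi fun _ ↦ continuous_const.inf continuous_id)).tendsto l).comp hal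
    rw [← inf_const_eq_of_mem_dominatedBy hx hxl]
    exact le_of_tendsto' htrunc fun k ↦ (hupp k _ ⟨bot_le, inf_le_right⟩).trans (hle _)

theorem partition_lemma_general [Finite ι] [DecidableEq ι]
    [ConditionallyCompleteLinearOrderBot R] [CountableInterFilter (atTop : Filter R)]
    [TopologicalSpace R] [OrderTopology R] [FirstCountableTopology R] [DenselyOrdered R]
    [NoMaxOrder R] {f : (ι → R) → R} {I : Finset ι} {c : ι → R} (hf : Continuous f)
    (h : ¬BddAbove (f '' range (diagonalPoint I c))) :
    IsClosed (partitionPoints f I) ∧ ∃ᶠ a in atTop, a ∈ partitionPoints f I :=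
  ⟨isClosed_partitionPoints hf I,
    frequently_mem_partitionPoints hf (divergesAlong_of_not_bddAbove hf h)⟩

end PartitionPoints

section OrderConstructions

variable {α β : Type*}

open scoped Classical in
/-- A linear order with least element in which nonempty sets have greatest lower bounds, as a
conditionally complete linear order. -/
abbrev conditionallyCompleteLinearOrderBotOfIsGLB [LinearOrder α] [OrderBot α]
    (h : ∀ s : Set α, s.Nonempty → ∃ a, IsGLB s a) : ConditionallyCompleteLinearOrderBot α :=
  letI : InfSet α := ⟨fun s ↦ if hs : s.Nonempty then (h s hs).choose else ⊥⟩
  have isGLB_sInf {s : Set α} (hs : s.Nonempty) : IsGLB s (sInf s) := by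
    have hsInf : sInf s = (h s hs).choose := dif_pos hs
    exact hsInf ▸ (h s hs).choose_spec
  have sInf_upperBounds_empty : sInf (upperBounds (∅ : Set α)) = ⊥ :=
    le_bot_iff.1 ((isGLB_sInf (by simp)).1 (by simp))
  { (inferInstance : LinearOrder α), (inferInstance : OrderBot α), LinearOrder.toLattice,
    conditionallyCompleteLatticeOfLatticeOfsInf α fun _ _ hs ↦ isGLB_sInf hs with
    csSup_empty := sInf_upperBounds_empty
    csSup_of_not_bddAbove := fun _ hs ↦ (dif_neg hs).trans sInf_upperBounds_empty.symm
    csInf_of_not_bddBelow := fun s hs ↦ (hs (OrderBot.bddBelow s)).elim }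

theorem exists_isGLB_lex [LinearOrder α] [WellFoundedLT α] [Preorder β]
    (hβ : ∀ s : Set β, s.Nonempty → ∃ b, IsGLB s b) {s : Set (α ×ₗ β)} (hs : s.Nonempty) :
    ∃ p, IsGLB s p := by
  obtain ⟨p, hp, hmin⟩ := (wellFounded_lt.onFun (f := fun q : α ×ₗ β ↦ (ofLex q).1)).has_min s hs
  obtain ⟨b, hb⟩ := hβ {b | toLex ((ofLex p).1, b) ∈ s} ⟨(ofLex p).2, hp⟩
  refine ⟨toLex ((ofLex p).1, b), fun q hq ↦ Prod.Lex.le_iff.2 ?_, fun q hq ↦ Prod.Lex.le_iff.2 ?_⟩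
  · rcases (not_lt.1 (hmin q hq)).lt_or_eq with h | h
    · exact .inl h
    · have hq' : toLex ((ofLex p).1, (ofLex q).2) ∈ s := by
        rw [show (ofLex p).1 = (ofLex q).1 from h]
        exact hq
      exact .inr ⟨h, hb.1 hq'⟩
  · rcases Prod.Lex.le_iff.1 (hq hp) with h | ⟨h, -⟩
    · exact .inl h
    · exact .inr ⟨h, hb.2 fun b' hb' ↦ ((Prod.Lex.le_iff.1 (hq hb')).resolve_left h.not_lt).2⟩

theorem isCountablyGenerated_nhds_of_countable [LinearOrder X] [TopologicalSpace X]
    [OrderTopology X] {p : X} {D : Set X} (hD : D.Countable)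
    (hleft : ∀ b < p, (D ∩ Ioo b p).Nonempty) (hright : ∀ b > p, (D ∩ Ioo p b).Nonempty) :
    (𝓝 p).IsCountablyGenerated := by
  have hcount (s : Set X) : Countable ↥(D ∩ s) := (hD.mono inter_subset_left).to_subtype
  have hnhds : 𝓝 p = (⨅ d : ↥(D ∩ Iio p), 𝓟 (Ioi d.1)) ⊓ ⨅ d : ↥(D ∩ Ioi p), 𝓟 (Iio d.1) := by
    rw [nhds_eq_order]
    refine le_antisymm (inf_le_inf ?_ ?_) (inf_le_inf ?_ ?_)
    · exact le_iInf fun d ↦ iInf₂_le d.1 d.2.2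
    · exact le_iInf fun d ↦ iInf₂_le d.1 d.2.2
    · refine le_iInf₂ fun b hb ↦ ?_
      obtain ⟨d, hd, hbd, hdp⟩ := hleft b hb
      exact (iInf_le _ ⟨d, hd, hdp⟩).trans (principal_mono.2 (Ioi_subset_Ioi hbd.le))
    · refine le_iInf₂ fun b hb ↦ ?_
      obtain ⟨d, hd, hpd, hdb⟩ := hright b hb
      exact (iInf_le _ ⟨d, hd, hpd⟩).trans (principal_mono.2 (Iio_subset_Iio hdb.le))
  rw [hnhds]
  infer_instance

variable [LinearOrder α] [LinearOrder β] [TopologicalSpace β] [OrderTopology β]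
  [DenselyOrdered β] [NoMaxOrder β]

theorem exists_lex_between {s : Set β} (hs : Dense s) {p q : α ×ₗ β} (hpq : p < q) :
    ∃ b ∈ s, toLex ((ofLex p).1, b) ∈ Ioo p q := by
  rcases Prod.Lex.lt_iff.1 hpq with h | ⟨h, h'⟩
  · obtain ⟨b, hb, hlt⟩ := hs.exists_gt (ofLex p).2
    exact ⟨b, hb, Prod.Lex.lt_iff.2 (.inr ⟨rfl, hlt⟩), Prod.Lex.lt_iff.2 (.inl h)⟩
  · obtain ⟨b, hb, hlt, hlt'⟩ := hs.exists_between h'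
    exact ⟨b, hb, Prod.Lex.lt_iff.2 (.inr ⟨rfl, hlt⟩), Prod.Lex.lt_iff.2 (.inr ⟨h, hlt'⟩)⟩

theorem firstCountableTopology_lex [TopologicalSpace.SeparableSpace β] [TopologicalSpace (α ×ₗ β)]
    [OrderTopology (α ×ₗ β)] (hα : ∀ a : α, (Iic a).Countable) :
    FirstCountableTopology (α ×ₗ β) where
  nhds_generated_countable p := by
    obtain ⟨s, hsc, hs⟩ := TopologicalSpace.exists_countable_dense β
    refine isCountablyGenerated_nhds_of_countable
      (((hα (ofLex p).1).prod hsc).image toLex) (fun q hq ↦ ?_) fun q hq ↦ ?_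
    · obtain ⟨b, hb, hmem⟩ := exists_lex_between hs hq
      have hqp : (ofLex q).1 ≤ (ofLex p).1 := (Prod.Lex.lt_iff.1 hq).elim le_of_lt fun h ↦ h.1.le
      exact ⟨_, mem_image_of_mem toLex (mk_mem_prod hqp hb), hmem⟩
    · obtain ⟨b, hb, hmem⟩ := exists_lex_between hs hq
      exact ⟨_, mem_image_of_mem toLex (mk_mem_prod self_mem_Iic hb), hmem⟩

end OrderConstructions

theorem isSuccLimit_Omega1 : Order.IsSuccLimit Omega1 :=
  Cardinal.isSuccLimit_omega 1

theorem countable_Iic_of_lt_Omega1 (o : {o : Ordinal // o < Omega1}) : (Iic o).Countable := by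
  have h : (Iio (Order.succ o.1)).Countable := by
    rw [← Cardinal.le_aleph0_iff_set_countable, Cardinal.mk_Iio_ordinal, Cardinal.lift_le_aleph0,
      ← Cardinal.lt_aleph_one_iff, ← Cardinal.lt_omega_iff_card_lt]
    exact isSuccLimit_Omega1.succ_lt o.2
  refine (h.preimage Subtype.val_injective).mono fun p hp ↦ ?_
  exact Order.lt_succ_of_le (show p.1 ≤ o.1 from hp)

theorem sSup_lt_Omega1 {T : Set Ordinal} (hT : T ⊆ Iio Omega1) (hc : T.Countable) :
    sSup T < Omega1 := by
  have := hc.to_subtype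
  rw [sSup_eq_iSup']
  exact Ordinal.iSup_lt_omega_one fun o ↦ hT o.2

namespace LongRay

/-- The ordinal coordinate of a point of the long ray. -/
def ord (p : LongRay) : Ordinal := (ofLex p).1

theorem ord_lt_Omega1 (p : LongRay) : p.ord < Omega1 :=
  (ofLex p).1.2

theorem ord_ordR {o : Ordinal} (ho : o < Omega1) : (ordR o).ord = o := by
  simp [ordR, ho, ord]

theorem ordR_le_iff {o : Ordinal} (ho : o < Omega1) {p : LongRay} : ordR o ≤ p ↔ o ≤ p.ord := by
  have hord : ordR o = toLex (⟨o, ho⟩, ⟨0, by simp⟩) := dif_pos ho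
  rw [hord, le_iff_lt_or_eq (a := o)]
  exact Prod.Lex.le_iff.trans (or_congr Iff.rfl ⟨fun h ↦ congrArg Subtype.val h.1,
    fun h ↦ ⟨Subtype.ext h, (ofLex p).2.2.1⟩⟩)

theorem ordR_le_ordR_iff {o o' : Ordinal} (ho : o < Omega1) (ho' : o' < Omega1) :
    ordR o ≤ ordR o' ↔ o ≤ o' := by
  rw [ordR_le_iff ho, ord_ordR ho']

theorem lt_ordR_succ_ord (p : LongRay) : p < ordR (Order.succ p.ord) := by
  rw [← not_le, ordR_le_iff (isSuccLimit_Omega1.succ_lt p.ord_lt_Omega1), not_le]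
  exact Order.lt_succ _

theorem isLUB_ordR_sSup {T : Set Ordinal} (hT : T ⊆ Iio Omega1) (hc : T.Countable)
    (hn : T.Nonempty) : IsLUB (ordR '' T) (ordR (sSup T)) := by
  have hs := sSup_lt_Omega1 hT hc
  refine ⟨forall_mem_image.2 fun o ho ↦ (ordR_le_ordR_iff (hT ho) hs).2
    (le_csSup (bddAbove_Iio.mono hT) ho), fun b hb ↦ (ordR_le_iff hs).2 (csSup_le hn fun o ho ↦ ?_)⟩
  exact (ordR_le_iff (hT ho)).1 (hb (mem_image_of_mem ordR ho))

instance : OrderBot LongRay where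
  bot := rayZero
  bot_le p := by
    rw [← show ordR 0 = rayZero from dif_pos omega1_pos, ordR_le_iff omega1_pos]
    exact zero_le

/-- The long ray as a conditionally complete linear order. It is not an instance, so that `≤` on the
long ray is always found through its `LinearOrder` instance. -/
abbrev conditionallyCompleteLinearOrderBot : ConditionallyCompleteLinearOrderBot LongRay :=
  conditionallyCompleteLinearOrderBotOfIsGLB fun _ hs ↦
    haveI : Inhabited (Ico (0 : ℝ) 1) := ⟨⟨0, by simp⟩⟩
    exists_isGLB_lex (fun _ ht ↦ ⟨_, isGLB_csInf ht ⟨⟨0, by simp⟩, fun b _ ↦ b.2.1⟩⟩) hs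

instance : DenselyOrdered LongRay :=
  inferInstanceAs (DenselyOrdered ({o : Ordinal // o < Omega1} ×ₗ Ico (0 : ℝ) 1))

instance : NoMaxOrder LongRay :=
  inferInstanceAs (NoMaxOrder ({o : Ordinal // o < Omega1} ×ₗ Ico (0 : ℝ) 1))

instance : FirstCountableTopology LongRay :=
  @firstCountableTopology_lex {o : Ordinal // o < Omega1} (Ico (0 : ℝ) 1) _ _ _ _ _ _ _
    instTopologicalSpaceLongRay instOrderTopologyLongRay countable_Iic_of_lt_Omega1

instance : CountableInterFilter (atTop : Filter LongRay) :=
  countableInterFilter_atTop_of_bddAbove fun s hs ↦ by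
    rcases s.eq_empty_or_nonempty with rfl | hn
    · exact bddAbove_empty
    have hT : (fun p : LongRay ↦ Order.succ p.ord) '' s ⊆ Iio Omega1 :=
      image_subset_iff.2 fun p _ ↦ isSuccLimit_Omega1.succ_lt p.ord_lt_Omega1
    exact ⟨_, fun p hp ↦ (lt_ordR_succ_ord p).le.trans
      ((isLUB_ordR_sSup hT (hs.image _) (hn.image _)).1
        (mem_image_of_mem _ (mem_image_of_mem _ hp)))⟩

theorem isClosed_image_ordR : IsClosed (ordR '' Iio Omega1) := by
  rw [← isOpen_compl_iff, isOpen_iff_mem_nhds]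
  intro p hp
  have hlt : ordR p.ord < p := ((ordR_le_iff p.ord_lt_Omega1).2 le_rfl).lt_of_ne
    fun h ↦ hp ⟨p.ord, p.ord_lt_Omega1, h⟩
  filter_upwards [Ioo_mem_nhds hlt (lt_ordR_succ_ord p)]
  rintro _ ⟨hlt, hlt'⟩ ⟨o, ho, rfl⟩
  have hsucc := isSuccLimit_Omega1.succ_lt p.ord_lt_Omega1
  rw [← not_le, ordR_le_ordR_iff ho p.ord_lt_Omega1, not_le] at hlt
  rw [← not_le, ordR_le_ordR_iff hsucc ho, not_le, Order.lt_succ_iff] at hlt'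
  exact hlt.not_ge hlt'

theorem frequently_mem_image_ordR : ∃ᶠ p in atTop, p ∈ ordR '' Iio Omega1 :=
  frequently_atTop.2 fun p ↦ ⟨_, (lt_ordR_succ_ord p).le, _,
    isSuccLimit_Omega1.succ_lt p.ord_lt_Omega1, rfl⟩

theorem isClub_setOf_ordR_mem {Z : Set LongRay} (hZ : IsClosed Z) (h : ∃ᶠ p in atTop, p ∈ Z) :
    (∀ a < Omega1, ∃ b ∈ {α : Ordinal | α < Omega1 ∧ ordR α ∈ Z}, a ≤ b) ∧
      ∀ T ⊆ {α : Ordinal | α < Omega1 ∧ ordR α ∈ Z}, T.Countable → T.Nonempty →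
        sSup T ∈ {α : Ordinal | α < Omega1 ∧ ordR α ∈ Z} := by
  let := conditionallyCompleteLinearOrderBot
  refine ⟨fun a ha ↦ ?_, fun T hT hc hn ↦ ?_⟩
  · obtain ⟨_, ⟨hp, o, ho, rfl⟩, hao⟩ :=
      ((frequently_inter_of_isClosed hZ isClosed_image_ordR h
        frequently_mem_image_ordR).and_eventually (eventually_ge_atTop (ordR a))).exists
    exact ⟨o, ⟨ho, hp⟩, (ordR_le_ordR_iff ha ho).1 hao⟩
  · have hTΩ : T ⊆ Iio Omega1 := fun o ho ↦ (hT ho).1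
    have himage : ordR '' T ⊆ Z := image_subset_iff.2 fun o ho ↦ (hT ho).2
    exact ⟨sSup_lt_Omega1 hTΩ hc, closure_minimal himage hZ
      ((isLUB_ordR_sSup hTΩ hc hn).mem_closure (hn.image ordR))⟩

end LongRay

section Translation

variable {n : ℕ} {f : (Fin n → LongRay) → LongRay} {I : Finset (Fin n)}

theorem Delta_subset_range_diagonalPoint (hI : I.Nonempty) (c : Fin n → LongRay) :
    Delta n I c ⊆ range (diagonalPoint I c) := by
  rintro x ⟨hxI, hxc⟩
  obtain ⟨i₀, hi₀⟩ := hI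
  refine ⟨x i₀, funext fun i ↦ ?_⟩
  by_cases hi : i ∈ I
  · simp [diagonalPoint, hi, hxI i₀ hi₀ i hi]
  · simp [diagonalPoint, hi, hxc i hi]

theorem ICofinal.not_bddAbove_image_range (hI : I.Nonempty) (h : ICofinal n f I) :
    ¬BddAbove (f '' range (diagonalPoint I fun _ ↦ rayZero)) :=
  fun hb ↦ h (hb.mono (image_mono (Delta_subset_range_diagonalPoint hI _)))

theorem APlus_AMinus_iff_mem_partitionPoints {a : LongRay} :
    ((∀ x ∈ APlus n I a, a ≤ f x) ∧ ∀ x ∈ AMinus n I a, f x ≤ a) ↔ a ∈ partitionPoints f I :=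
  ⟨fun h x hx ↦ ⟨fun hax ↦ h.1 x ⟨hax, hx⟩, fun hxa ↦ h.2 x ⟨hxa, hx⟩⟩,
    fun h ↦ ⟨fun x hx ↦ (h x hx.2).1 hx.1, fun x hx ↦ (h x hx.2).2 hx.1⟩⟩

end Translation

/-- if `f` is `I`-cofinal, the set of `α < ω₁` with
`f(A_I^+(α)) ⊆ [α,ω₁)` and `f(A_I^-(α)) ⊆ [0,α]` is closed and unbounded in `ω₁`. -/
theorem partition_lemma (n : ℕ) (f : (Fin n → LongRay) → LongRay)
    (hf : Continuous f) (I : Finset (Fin n)) (hI : I.Nonempty)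
    (hcof : ICofinal n f I) :
    (∀ a < Omega1, ∃ b ∈ {α : Ordinal | α < Omega1 ∧
        (∀ x ∈ APlus n I (ordR α), ordR α ≤ f x) ∧
        (∀ x ∈ AMinus n I (ordR α), f x ≤ ordR α)}, a ≤ b) ∧
    (∀ T ⊆ {α : Ordinal | α < Omega1 ∧
        (∀ x ∈ APlus n I (ordR α), ordR α ≤ f x) ∧
        (∀ x ∈ AMinus n I (ordR α), f x ≤ ordR α)},
      T.Countable → T.Nonempty →
        sSup T ∈ {α : Ordinal | α < Omega1 ∧
          (∀ x ∈ APlus n I (ordR α), ordR α ≤ f x) ∧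
          (∀ x ∈ AMinus n I (ordR α), f x ≤ ordR α)}) := by
  let := LongRay.conditionallyCompleteLinearOrderBot
  obtain ⟨hclosed, hfreq⟩ := partition_lemma_general hf (hcof.not_bddAbove_image_range hI)
  simpa only [APlus_AMinus_iff_mem_partitionPoints] using
    LongRay.isClub_setOf_ordR_mem hclosed hfreq
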